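/- arXiv:0802.2045 — 2 statements merged into one kernel-verified Lean document; each statement's English description precedes it below -/
import Mathlib

section
/- Let q be a prime power, F a finite field with q elements, and let M ⊆ F^q be the set of vectors whose q coordinates are pairwise distinct (injective tuples Fin q → F). Every point v ∈ M lies on exactly one affine line of F^q contained in M, namely the line {v + t•(1, 1, …, 1) : t ∈ F}; consequently the affine lines contained in M partition M. -/
/-!
If `d i ≠ d j`, then along the line `y + t • d` the difference of the coordinates `i` and `j` is a
nonconstant affine function of `t`, so it vanishes somewhere. A line of tuples with pairwise
distinct coordinates therefore has a constant direction, which spans the same subspace as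
`(1, …, 1)`.
-/

open Submodule

theorem setOf_eq_add_smul_eq_mk'_span_singleton {R V : Type*} [Ring R] [AddCommGroup V]
    [Module R V] (y d : V) :
    {z : V | ∃ t : R, z = y + t • d} = AffineSubspace.mk' y (R ∙ d) := by
  ext z
  simp only [Set.mem_ofPred_eq, SetLike.mem_coe, AffineSubspace.mem_mk', vsub_eq_sub,
    mem_span_singleton, eq_sub_iff_add_eq', eq_comm]

section Tuples

variable {ι K : Type*} [DivisionRing K]

theorem apply_eq_of_forall_injective_add_smul {y d : ι → K}
    (h : ∀ t : K, Function.Injective (y + t • d)) (i j : ι) : d i = d j := by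
  by_contra hij
  have hsub : d i - d j ≠ 0 := sub_ne_zero.mpr hij
  let t : K := (y j - y i) / (d i - d j)
  have ht : t * d i - t * d j = y j - y i := by rw [← mul_sub, div_mul_cancel₀ _ hsub]
  have collision : (y + t • d) i = (y + t • d) j := by
    simp only [Pi.add_apply, Pi.smul_apply, smul_eq_mul]
    rw [← sub_eq_zero, add_sub_add_comm, ht, sub_add_sub_cancel, sub_self]
  exact hij (congrArg d (h t collision))

theorem span_singleton_eq_span_one_of_forall_eq {d : ι → K} (hd : d ≠ 0)
    (hconst : ∀ i j, d i = d j) :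
    K ∙ d = K ∙ (1 : ι → K) := by
  obtain ⟨i, hi⟩ := Function.ne_iff.mp hd
  have hd_smul : d = d i • (1 : ι → K) := by
    ext j
    simpa using hconst j i
  rw [hd_smul, span_singleton_smul_eq (IsUnit.mk0 _ hi)]

theorem unique_line_through_point_of_braid_complement_general
    {v : ι → K} (hv : Function.Injective v) :
    {z : ι → K | ∃ t : K, z = v + t • (1 : ι → K)} ⊆ {w : ι → K | Function.Injective w} ∧
      v ∈ {z : ι → K | ∃ t : K, z = v + t • (1 : ι → K)} ∧
      ∀ l : Set (ι → K),
        (∃ (y d : ι → K), d ≠ 0 ∧ l = {z : ι → K | ∃ t : K, z = y + t • d}) →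
        l ⊆ {w : ι → K | Function.Injective w} → v ∈ l →
          l = {z : ι → K | ∃ t : K, z = v + t • (1 : ι → K)} := by
  refine ⟨?_, ⟨0, by rw [zero_smul, add_zero]⟩, ?_⟩
  · rintro _ ⟨t, rfl⟩ i j hij
    exact hv (by simpa using hij)
  · rintro _ ⟨y, d, hd, rfl⟩ hl hvl
    have hconst : ∀ i j, d i = d j := apply_eq_of_forall_injective_add_smul fun t => hl ⟨t, rfl⟩
    rw [setOf_eq_add_smul_eq_mk'_span_singleton] at hvl
    have rebase : AffineSubspace.mk' v (K ∙ d) = AffineSubspace.mk' y (K ∙ d) := by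
      simpa only [AffineSubspace.direction_mk'] using AffineSubspace.mk'_eq hvl
    rw [setOf_eq_add_smul_eq_mk'_span_singleton, setOf_eq_add_smul_eq_mk'_span_singleton,
      ← rebase, span_singleton_eq_span_one_of_forall_eq hd hconst]

end Tuples

/-- Let `M ⊆ F^q` be the set of vectors with pairwise distinct coordinates
(injective tuples `Fin q → F`, where `q = |F|`). Every point `v ∈ M` lies on exactly one
affine line of `F^q` contained in `M`, namely the line `{v + t • (1,…,1) : t ∈ F}`;
consequently the affine lines contained in `M` partition `M`. -/
theorem unique_line_through_point_of_braid_complement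
    (q : ℕ) (hq : IsPrimePow q)
    (F : Type) [Field F] [Fintype F] (hF : Fintype.card F = q)
    (v : Fin q → F) (hv : Function.Injective v) :
    {z : Fin q → F | ∃ t : F, z = v + t • (1 : Fin q → F)} ⊆
        {w : Fin q → F | Function.Injective w} ∧
      v ∈ {z : Fin q → F | ∃ t : F, z = v + t • (1 : Fin q → F)} ∧
      ∀ l : Set (Fin q → F),
        (∃ (y d : Fin q → F), d ≠ 0 ∧ l = {z : Fin q → F | ∃ t : F, z = y + t • d}) →
        l ⊆ {w : Fin q → F | Function.Injective w} → v ∈ l →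
          l = {z : Fin q → F | ∃ t : F, z = v + t • (1 : Fin q → F)} :=
  unique_line_through_point_of_braid_complement_general hv
end

section
/- Let q be a prime power, F a finite field with q elements, and let M ⊆ F^q be the set of vectors whose q coordinates are pairwise distinct (injective tuples Fin q → F). Then there exists a set B ⊆ M of cardinality (q−1)! that meets every affine line contained in M in exactly one point. In particular B is a blocking set of M with respect to its lines (B meets every affine line contained in M) and it is minimal: no proper subset of B meets every affine line contained in M. -/
/-!
If every point of a line `y + F • d` has pairwise distinct coordinates, then no difference
`d i - d j` can be nonzero, since otherwise the coordinates `i` and `j` agree for some parameter.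
So `d` is constant, and the lines contained in `M` are the cosets in `M` of the diagonal
`F • (1, …, 1)`. Each coset contains exactly one point whose coordinate at a fixed index `i₀` is
zero, and these points form `B`. Since `B` meets every line once and is covered by the lines,
removing any of its points leaves a line unblocked.
-/

section Blocking

variable {α : Type*}

/-- A blocking set of a family `L` of subsets of `α`: a set meeting every member of `L`. -/
def IsBlockingSet (L : Set (Set α)) (B : Set α) : Prop :=
  ∀ l ∈ L, ∃ p ∈ B, p ∈ l

theorem minimal_isBlockingSet_of_existsUnique {L : Set (Set α)} {B : Set α}
    (hunique : ∀ l ∈ L, ∃! p, p ∈ B ∩ l) (hcover : B ⊆ ⋃₀ L) :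
    Minimal (IsBlockingSet L) B := by
  refine ⟨fun l hl => (hunique l hl).exists, fun B' hB' hsub p hp => ?_⟩
  obtain ⟨l, hl, hpl⟩ := hcover hp
  obtain ⟨p', hp', hp'l⟩ := hB' l hl
  have heq : p' = p := (hunique l hl).unique ⟨hsub hp', hp'l⟩ ⟨hp, hpl⟩
  exact heq ▸ hp'

end Blocking

section Lines

variable (𝕜 : Type*) {V : Type*} [AddCommMonoid V]

/-- The affine line through `y` with direction `d`; it degenerates to the point `y` for `d = 0`. -/
def affineLine [SMul 𝕜 V] (y d : V) : Set V :=
  {z | ∃ t : 𝕜, z = y + t • d}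

/-- The affine lines contained in `M`. -/
def linesIn [SMul 𝕜 V] (M : Set V) : Set (Set V) :=
  {l | (∃ y d : V, d ≠ 0 ∧ l = affineLine 𝕜 y d) ∧ l ⊆ M}

theorem self_mem_affineLine [Semiring 𝕜] [Module 𝕜 V] (y d : V) : y ∈ affineLine 𝕜 y d :=
  ⟨0, by simp⟩

variable {𝕜} in
theorem affineLine_smul [DivisionRing 𝕜] [Module 𝕜 V] {a : 𝕜} (ha : a ≠ 0) (y d : V) :
    affineLine 𝕜 y (a • d) = affineLine 𝕜 y d := by
  ext z
  constructor
  · rintro ⟨t, rfl⟩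
    exact ⟨t * a, by rw [mul_smul]⟩
  · rintro ⟨t, rfl⟩
    exact ⟨t * a⁻¹, by rw [smul_smul, inv_mul_cancel_right₀ ha]⟩

end Lines

section PointedInjections

variable {ι β : Type*}

open Classical in
/-- Injections `ι → β` sending `i₀` to `b` correspond to embeddings of the complement of `i₀` into
the complement of `b`, by restriction. -/
noncomputable def pointedInjectionEquiv (i₀ : ι) (b : β) :
    {v : ι → β // Function.Injective v ∧ v i₀ = b} ≃ ({i // i ≠ i₀} ↪ {x // x ≠ b}) where
  toFun v :=
    { toFun := fun i => ⟨v.1 i, fun h => i.2 (v.2.1 (h.trans v.2.2.symm))⟩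
      inj' := fun _ _ h => Subtype.ext (v.2.1 (congrArg Subtype.val h)) }
  invFun f :=
    ⟨fun i => if h : i = i₀ then b else f ⟨i, h⟩, by
      refine ⟨fun i j hij => ?_, dif_pos rfl⟩
      by_cases hi : i = i₀ <;> by_cases hj : j = i₀
      · exact hi.trans hj.symm
      · exact absurd (by simpa [hi, hj] using hij.symm) (f ⟨j, hj⟩).2
      · exact absurd (by simpa [hi, hj] using hij) (f ⟨i, hi⟩).2
      · have hf : f ⟨i, hi⟩ = f ⟨j, hj⟩ := Subtype.ext (by simpa [hi, hj] using hij)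
        exact congrArg Subtype.val (f.injective hf)⟩
  left_inv v := by
    ext i
    by_cases hi : i = i₀
    · simp [hi, v.2.2]
    · exact dif_neg hi
  right_inv f := by
    ext i
    simp [i.2]

theorem card_embedding_ne [Finite ι] [Finite β] (i₀ : ι) (b : β) :
    Nat.card ({i // i ≠ i₀} ↪ {x // x ≠ b}) =
      (Nat.card β - 1).descFactorial (Nat.card ι - 1) := by
  classical
  have := Fintype.ofFinite ι
  have := Fintype.ofFinite β
  simp only [Nat.card_eq_fintype_card, Fintype.card_embedding_eq, ne_eq,
    Fintype.card_subtype_compl, Fintype.card_subtype_eq]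

end PointedInjections

section BraidComplement

variable {ι F : Type*}

/-- The complement in `ι → F` of the braid arrangement, whose hyperplanes are `v i = v j` for
`i ≠ j`. -/
def braidComplement (ι F : Type*) : Set (ι → F) :=
  {v | Function.Injective v}

/-- The points of the braid complement whose coordinate at `i₀` vanishes: a choice of one point on
each line of the complement. -/
def braidTransversal (F : Type*) [Zero F] (i₀ : ι) : Set (ι → F) :=
  {v ∈ braidComplement ι F | v i₀ = 0}

theorem affineLine_one_subset_braidComplement [Ring F] {y : ι → F}
    (hy : y ∈ braidComplement ι F) : affineLine F y 1 ⊆ braidComplement ι F := by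
  rintro _ ⟨t, rfl⟩ i j hij
  exact hy (by simpa using hij)

theorem existsUnique_mem_affineLine_one_apply_eq_zero [Ring F] (i₀ : ι) (y : ι → F) :
    ∃! p, p ∈ affineLine F y 1 ∧ p i₀ = 0 := by
  refine ⟨y + (-y i₀) • 1, ⟨⟨-y i₀, rfl⟩, by simp⟩, ?_⟩
  rintro _ ⟨⟨t, rfl⟩, ht⟩
  have ht' : t = -y i₀ := eq_neg_of_add_eq_zero_right (by simpa using ht)
  rw [ht']

variable [DivisionRing F]

theorem direction_apply_eq_of_affineLine_subset {y d : ι → F}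
    (h : affineLine F y d ⊆ braidComplement ι F) (i j : ι) : d i = d j := by
  by_contra hd
  have hd' : d i - d j ≠ 0 := sub_ne_zero.mpr hd
  let t : F := (y j - y i) / (d i - d j)
  have ht : t * d i - t * d j = y j - y i := by
    rw [← mul_sub, div_mul_cancel₀ _ hd']
  have hcoord : (y + t • d) i = (y + t • d) j := by
    simp only [Pi.add_apply, Pi.smul_apply, smul_eq_mul]
    rw [← sub_eq_zero, add_sub_add_comm, ht]
    abel
  exact hd (congrArg d (h ⟨t, rfl⟩ hcoord))

theorem mem_linesIn_braidComplement_iff [Nonempty ι] {l : Set (ι → F)} :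
    l ∈ linesIn F (braidComplement ι F) ↔
      ∃ y ∈ braidComplement ι F, l = affineLine F y 1 := by
  constructor
  · rintro ⟨⟨y, d, hd, rfl⟩, hM⟩
    obtain ⟨i, hi⟩ := Function.ne_iff.mp hd
    have hconst : d = d i • 1 := by
      ext j
      simpa using direction_apply_eq_of_affineLine_subset hM j i
    exact ⟨y, hM (self_mem_affineLine F y d), by rw [hconst, affineLine_smul hi]⟩
  · rintro ⟨y, hy, rfl⟩
    exact ⟨⟨y, 1, one_ne_zero, rfl⟩, affineLine_one_subset_braidComplement hy⟩

theorem existsUnique_mem_braidTransversal_inter (i₀ : ι) {l : Set (ι → F)}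
    (hl : l ∈ linesIn F (braidComplement ι F)) : ∃! p, p ∈ braidTransversal F i₀ ∩ l := by
  have : Nonempty ι := ⟨i₀⟩
  obtain ⟨y, -, rfl⟩ := mem_linesIn_braidComplement_iff.mp hl
  obtain ⟨p, ⟨hpl, hp⟩, hunique⟩ := existsUnique_mem_affineLine_one_apply_eq_zero i₀ y
  exact ⟨p, ⟨⟨hl.2 hpl, hp⟩, hpl⟩, fun p' hp' => hunique p' ⟨hp'.2, hp'.1.2⟩⟩

theorem braidTransversal_subset_sUnion_linesIn (i₀ : ι) :
    braidTransversal F i₀ ⊆ ⋃₀ linesIn F (braidComplement ι F) := fun p hp =>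
  have : Nonempty ι := ⟨i₀⟩
  ⟨affineLine F p 1, mem_linesIn_braidComplement_iff.mpr ⟨p, hp.1, rfl⟩,
    self_mem_affineLine F p 1⟩

variable (F) in
theorem braid_complement_has_minimal_blocking_general (i₀ : ι) :
    ∃ B ⊆ braidComplement ι F,
      Nonempty (B ≃ ({i // i ≠ i₀} ↪ {x : F // x ≠ 0})) ∧
      (∀ l ∈ linesIn F (braidComplement ι F), ∃! p, p ∈ B ∩ l) ∧
      Minimal (IsBlockingSet (linesIn F (braidComplement ι F))) B :=
  have hunique := fun _ => existsUnique_mem_braidTransversal_inter (F := F) i₀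
  ⟨braidTransversal F i₀, fun _ hv => hv.1, ⟨pointedInjectionEquiv i₀ 0⟩, hunique,
    minimal_isBlockingSet_of_existsUnique hunique (braidTransversal_subset_sUnion_linesIn i₀)⟩

end BraidComplement

/-- Let `M ⊆ F^q` be the set of vectors with pairwise distinct coordinates
(injective tuples `Fin q → F`, where `q = |F|`). Then there is a set `B ⊆ M` of
cardinality `(q-1)!` meeting every affine line contained in `M` in exactly one point;
in particular `B` is a blocking set of `M` with respect to its lines, and it is minimal:
no proper subset of `B` meets every affine line contained in `M`. -/
theorem braid_complement_has_minimal_blocking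
    (q : ℕ) (hq : IsPrimePow q)
    (F : Type) [Field F] [Fintype F] (hF : Fintype.card F = q) :
    ∃ B : Set (Fin q → F),
      B ⊆ {v : Fin q → F | Function.Injective v} ∧
      B.ncard = (q - 1).factorial ∧
      (∀ l : Set (Fin q → F),
        (∃ (y d : Fin q → F), d ≠ 0 ∧ l = {z : Fin q → F | ∃ t : F, z = y + t • d}) →
        l ⊆ {v : Fin q → F | Function.Injective v} →
          ∃! p, p ∈ B ∩ l) ∧
      (∀ l : Set (Fin q → F),
        (∃ (y d : Fin q → F), d ≠ 0 ∧ l = {z : Fin q → F | ∃ t : F, z = y + t • d}) →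
        l ⊆ {v : Fin q → F | Function.Injective v} →
          ∃ p ∈ B, p ∈ l) ∧
      (∀ B' ⊂ B, ¬ ∀ l : Set (Fin q → F),
        (∃ (y d : Fin q → F), d ≠ 0 ∧ l = {z : Fin q → F | ∃ t : F, z = y + t • d}) →
        l ⊆ {v : Fin q → F | Function.Injective v} →
          ∃ p ∈ B', p ∈ l) := by
  have : NeZero q := ⟨hq.ne_zero⟩
  obtain ⟨B, hBM, ⟨e⟩, hunique, hmin⟩ :=
    braid_complement_has_minimal_blocking_general F (0 : Fin q)
  have hcard : B.ncard = (q - 1).factorial := by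
    rw [← Nat.card_coe_set_eq, Nat.card_congr e, card_embedding_ne, Nat.card_fin,
      Nat.card_eq_fintype_card, hF, Nat.descFactorial_self]
  exact ⟨B, hBM, hcard, fun l hl hlM => hunique l ⟨hl, hlM⟩,
    fun l hl hlM => hmin.prop l ⟨hl, hlM⟩,
    fun _ hB' hblock => hmin.not_prop_of_ssubset hB' fun l hl => hblock l hl.1 hl.2⟩
end
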